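/- Let j ∈ R_k with |R_k| ≥ 2, and let R' = R \ {j} with files R'_l = R_l \ {j}. Let C₀ be any partition of R' and set n₀ = |C₀|. Let C = C₀ ∪ {{j}} be the partition of R obtained by adding j as a new singleton cluster. Then g_R(C)/g_{R'}(C₀) = [P(n₀+1)/P(n₀)] · [(n₀+1)/(n₀+α₀)] · (n_{1_k}(C₀) + α_{1_k}) · p_k(1) / |R_k|, where 1_k ∈ H is the pattern with k-th entry 1 and all other entries 0, and g_R and g_{R'} denote the structured prior density computed with respect to the ground sets R and R' respectively. -/

import Mathlib

/-- A partition of a finite set `S`: a collection of nonempty pairwise disjoint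
subsets (blocks) of `S` whose union is `S`. -/
def IsPartitionOf {β : Type*} [DecidableEq β] (S : Finset β) (C : Finset (Finset β)) : Prop :=
  (∀ c ∈ C, c.Nonempty) ∧
  (∀ c ∈ C, ∀ c' ∈ C, c ≠ c' → Disjoint c c') ∧
  C.biUnion id = S

/-- The inclusion pattern of a block `c`: `h(c)_k = 1` iff `c ∩ R_k ≠ ∅`. -/
def patternOf {α : Type*} [DecidableEq α] {K : ℕ} (R : Fin K → Finset α)
    (c : Finset α) : Fin K → Bool := fun k => decide ((c ∩ R k) ≠ ∅)

/-- `H = {0,1}^K \ {(0,…,0)}`, the set of nonzero inclusion patterns. -/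
def Hset (K : ℕ) : Finset (Fin K → Bool) :=
  Finset.univ.filter (fun h => h ≠ fun _ => false)

/-- The inclusion pattern `1_k` with `k`-th entry `1` and all other entries `0`. -/
def onePat {K : ℕ} (k : Fin K) : Fin K → Bool := fun k' => decide (k' = k)

/-- The structured prior density
`g_R(C) = P(n(C)) · n(C)! · (Γ(α₀)/Γ(n(C)+α₀)) · ∏_{h∈H} Γ(n_h(C)+α_h)/Γ(α_h) ·
∏_k (1/|R_k|!) ∏_{c ∈ C, c ∩ R_k ≠ ∅} |c ∩ R_k|! p_k(|c ∩ R_k|)`. -/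
noncomputable def priorDensity {α : Type*} [DecidableEq α] {K : ℕ} (R : Fin K → Finset α)
    (P : ℕ → ℝ) (p : Fin K → ℕ → ℝ) (a : (Fin K → Bool) → ℝ)
    (C : Finset (Finset α)) : ℝ :=
  P C.card * (Nat.factorial C.card : ℝ) *
    (Real.Gamma (∑ h ∈ Hset K, a h) /
      Real.Gamma ((C.card : ℝ) + ∑ h ∈ Hset K, a h)) *
    (∏ h ∈ Hset K,
      Real.Gamma (((C.filter (fun c => patternOf R c = h)).card : ℝ) + a h) /
        Real.Gamma (a h)) *
    ∏ k, ((1 / (Nat.factorial (R k).card : ℝ)) *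
      ∏ c ∈ C.filter (fun c => (c ∩ R k) ≠ ∅),
        ((Nat.factorial (c ∩ R k).card : ℝ) * p k ((c ∩ R k).card)))

/-!
Adding the record `j` splits into two moves. Enlarging the partition by the block `{j}` over the
fixed ground set `R` multiplies each factor of the density by a ratio that telescopes: the
factorial and the Gamma functions contribute their recurrences, and only the pattern of the new
block changes its count. Removing `j` from the ground set changes no intersection of a block of
`C₀` with a file, so it affects only the factor `1 / |R_k|!`.
-/

section

open Finset

variable {α : Type*} [DecidableEq α] {K : ℕ}

theorem Gamma_natCast_add_one_add {x : ℝ} (hx : 0 < x) (n : ℕ) :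
    Real.Gamma (n + 1 + x) = (n + x) * Real.Gamma (n + x) := by
  rw [add_right_comm, Real.Gamma_add_one (by positivity)]

theorem IsPartitionOf.notMem_of_mem {S : Finset α} {C : Finset (Finset α)}
    (hC : IsPartitionOf S C) {x : α} (hx : x ∉ S) {c : Finset α} (hc : c ∈ C) : x ∉ c :=
  fun hxc => hx (hC.2.2 ▸ mem_biUnion.2 ⟨c, hc, hxc⟩)

theorem inter_erase_eq_inter_of_notMem {c : Finset α} {j : α} (hc : j ∉ c) (S : Finset α) :
    c ∩ S.erase j = c ∩ S := by
  rw [inter_erase, erase_eq_of_notMem fun h => hc (mem_inter.1 h).1]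

theorem singleton_inter_ne_empty_iff {j : α} {S : Finset α} : {j} ∩ S ≠ ∅ ↔ j ∈ S := by
  rw [Ne, ← disjoint_iff_inter_eq_empty, disjoint_singleton_left, not_not]

theorem onePat_mem_Hset (k : Fin K) : onePat k ∈ Hset K :=
  mem_filter.2 ⟨mem_univ _, fun h => by simpa [onePat] using congrFun h k⟩

theorem patternOf_singleton {R : Fin K → Finset α} {j : α} {k : Fin K}
    (hj : ∀ l, j ∈ R l ↔ l = k) : patternOf R {j} = onePat k := by
  funext l
  simp only [patternOf, onePat, singleton_inter_ne_empty_iff, hj]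

theorem patternOf_erase (R : Fin K → Finset α) {c : Finset α} {j : α} (hc : j ∉ c) :
    patternOf (fun l => (R l).erase j) c = patternOf R c := by
  funext l
  simp only [patternOf, inter_erase_eq_inter_of_notMem hc]

/-- The number `n_h(C)` of blocks of `C` with inclusion pattern `h`. -/
def patternCount (R : Fin K → Finset α) (C : Finset (Finset α)) (h : Fin K → Bool) : ℕ :=
  (C.filter (fun c => patternOf R c = h)).card

theorem patternCount_insert (R : Fin K → Finset α) {C : Finset (Finset α)} {c : Finset α}
    (hc : c ∉ C) (h : Fin K → Bool) :
    patternCount R (insert c C) h = patternCount R C h + if patternOf R c = h then 1 else 0 := by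
  unfold patternCount
  rw [filter_insert]
  split_ifs
  · exact card_insert_of_notMem fun hmem => hc (mem_filter.1 hmem).1
  · rfl

theorem patternCount_erase (R : Fin K → Finset α) {C : Finset (Finset α)} {j : α}
    (hC : ∀ c ∈ C, j ∉ c) (h : Fin K → Bool) :
    patternCount (fun l => (R l).erase j) C h = patternCount R C h :=
  congrArg card <| filter_congr fun c hc => by rw [patternOf_erase R (hC c hc)]

/-- The factor `∏_{h ∈ H} Γ(n_h(C) + α_h) / Γ(α_h)` of the structured prior density. -/
noncomputable def patternWeight (R : Fin K → Finset α) (a : (Fin K → Bool) → ℝ)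
    (C : Finset (Finset α)) : ℝ :=
  ∏ h ∈ Hset K, Real.Gamma (patternCount R C h + a h) / Real.Gamma (a h)

theorem patternWeight_pos (R : Fin K → Finset α) {a : (Fin K → Bool) → ℝ}
    (ha : ∀ h ∈ Hset K, 0 < a h) (C : Finset (Finset α)) : 0 < patternWeight R a C :=
  prod_pos fun h hh => div_pos
    (Real.Gamma_pos_of_pos (add_pos_of_nonneg_of_pos (Nat.cast_nonneg _) (ha h hh)))
    (Real.Gamma_pos_of_pos (ha h hh))

theorem patternWeight_insert {R : Fin K → Finset α} {a : (Fin K → Bool) → ℝ}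
    (ha : ∀ h ∈ Hset K, 0 < a h) {C : Finset (Finset α)} {c : Finset α} (hc : c ∉ C)
    (hpat : patternOf R c ∈ Hset K) :
    patternWeight R a (insert c C) =
      (patternCount R C (patternOf R c) + a (patternOf R c)) * patternWeight R a C := by
  have factor_eq : ∀ h ∈ Hset K,
      Real.Gamma (patternCount R (insert c C) h + a h) / Real.Gamma (a h) =
        (if patternOf R c = h then patternCount R C h + a h else 1) *
          (Real.Gamma (patternCount R C h + a h) / Real.Gamma (a h)) := by
    intro h hh
    rw [patternCount_insert R hc]
    split_ifs
    · rw [Nat.cast_succ, Gamma_natCast_add_one_add (ha h hh), mul_div_assoc]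
    · rw [add_zero, one_mul]
  rw [patternWeight, prod_congr rfl factor_eq, prod_mul_distrib, prod_ite_eq, if_pos hpat,
    patternWeight]

theorem patternWeight_erase (R : Fin K → Finset α) (a : (Fin K → Bool) → ℝ)
    {C : Finset (Finset α)} {j : α} (hC : ∀ c ∈ C, j ∉ c) :
    patternWeight (fun l => (R l).erase j) a C = patternWeight R a C := by
  simp only [patternWeight, patternCount_erase R hC]

/-- The contribution `∏_k |c ∩ R_k|! p_k(|c ∩ R_k|)` of a block `c` to the structured prior
density, over the files that `c` meets. -/
noncomputable def blockWeight (R : Fin K → Finset α) (p : Fin K → ℕ → ℝ) (c : Finset α) : ℝ :=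
  ∏ l, if c ∩ R l ≠ ∅ then ((c ∩ R l).card.factorial : ℝ) * p l (c ∩ R l).card else 1

theorem blockWeight_ne_zero (R : Fin K → Finset α) {p : Fin K → ℕ → ℝ}
    (hp : ∀ l m, p l m ≠ 0) (c : Finset α) : blockWeight R p c ≠ 0 := by
  refine prod_ne_zero_iff.2 fun l _ => ?_
  split_ifs
  · exact mul_ne_zero (Nat.cast_ne_zero.2 (Nat.factorial_ne_zero _)) (hp _ _)
  · exact one_ne_zero

theorem blockWeight_singleton {R : Fin K → Finset α} (p : Fin K → ℕ → ℝ) {j : α} {k : Fin K}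
    (hj : ∀ l, j ∈ R l ↔ l = k) : blockWeight R p {j} = p k 1 := by
  simp only [blockWeight, singleton_inter_ne_empty_iff, hj, prod_ite_eq', mem_univ, if_true,
    singleton_inter_of_mem ((hj k).2 rfl), card_singleton, Nat.factorial_one, Nat.cast_one, one_mul]

theorem blockWeight_erase (R : Fin K → Finset α) (p : Fin K → ℕ → ℝ) {c : Finset α} {j : α}
    (hc : j ∉ c) : blockWeight (fun l => (R l).erase j) p c = blockWeight R p c := by
  simp only [blockWeight, inter_erase_eq_inter_of_notMem hc]

theorem prod_inv_factorial_card_eq_div {R : Fin K → Finset α} {j : α} {k : Fin K}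
    (hj : ∀ l, j ∈ R l ↔ l = k) :
    ∏ l, (1 / ((R l).card.factorial : ℝ)) =
      (∏ l, (1 / (((R l).erase j).card.factorial : ℝ))) / (R k).card := by
  have factor_eq : ∀ l, 1 / ((R l).card.factorial : ℝ) =
      1 / (((R l).erase j).card.factorial : ℝ) / if l = k then ((R l).card : ℝ) else 1 := by
    intro l
    split_ifs with hl
    · have hjl := (hj l).2 hl
      rw [div_div, ← Nat.mul_factorial_pred (card_ne_zero_of_mem hjl), card_erase_of_mem hjl,
        Nat.cast_mul, mul_comm]
    · rw [erase_eq_of_notMem fun hjl => hl ((hj l).1 hjl), div_one]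
  simp only [factor_eq, prod_div_distrib, prod_ite_eq', mem_univ, if_true]

theorem priorDensity_eq_mul_prod_blockWeight (R : Fin K → Finset α) (P : ℕ → ℝ)
    (p : Fin K → ℕ → ℝ) (a : (Fin K → Bool) → ℝ) (C : Finset (Finset α)) :
    priorDensity R P p a C =
      P C.card * C.card.factorial *
        (Real.Gamma (∑ h ∈ Hset K, a h) / Real.Gamma (C.card + ∑ h ∈ Hset K, a h)) *
        patternWeight R a C *
        ((∏ l, (1 / ((R l).card.factorial : ℝ))) * ∏ c ∈ C, blockWeight R p c) := by
  simp only [priorDensity, patternWeight, patternCount, blockWeight, prod_filter]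
  rw [prod_mul_distrib, prod_comm (s := univ)]

theorem priorDensity_ne_zero (R : Fin K → Finset α) {P : ℕ → ℝ} {p : Fin K → ℕ → ℝ}
    (hp : ∀ l m, p l m ≠ 0) {a : (Fin K → Bool) → ℝ} (ha : ∀ h ∈ Hset K, 0 < a h)
    (ha₀ : 0 < ∑ h ∈ Hset K, a h) {C : Finset (Finset α)} (hP : P C.card ≠ 0) :
    priorDensity R P p a C ≠ 0 := by
  have hΓ₀ := Real.Gamma_pos_of_pos ha₀
  have hΓ := Real.Gamma_pos_of_pos (add_pos_of_nonneg_of_pos C.card.cast_nonneg ha₀)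
  have hblocks : ∏ c ∈ C, blockWeight R p c ≠ 0 :=
    prod_ne_zero_iff.2 fun c _ => blockWeight_ne_zero R hp c
  rw [priorDensity_eq_mul_prod_blockWeight]
  exact mul_ne_zero (mul_ne_zero (mul_ne_zero (mul_ne_zero hP (by positivity))
    (div_pos hΓ₀ hΓ).ne') (patternWeight_pos R ha C).ne') (mul_ne_zero (by positivity) hblocks)

theorem priorDensity_insert {R : Fin K → Finset α} {P : ℕ → ℝ} (p : Fin K → ℕ → ℝ)
    {a : (Fin K → Bool) → ℝ} (ha : ∀ h ∈ Hset K, 0 < a h) {C : Finset (Finset α)}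
    (hP : P C.card ≠ 0) {c : Finset α} (hc : c ∉ C) (hpat : patternOf R c ∈ Hset K) :
    priorDensity R P p a (insert c C) =
      P (C.card + 1) / P C.card * ((C.card + 1) / (C.card + ∑ h ∈ Hset K, a h)) *
        (patternCount R C (patternOf R c) + a (patternOf R c)) * blockWeight R p c *
        priorDensity R P p a C := by
  have ha₀ : 0 < ∑ h ∈ Hset K, a h := sum_pos ha ⟨_, hpat⟩
  simp only [priorDensity_eq_mul_prod_blockWeight, card_insert_of_notMem hc, prod_insert hc,
    patternWeight_insert ha hc hpat, Nat.factorial_succ, Nat.cast_mul, Nat.cast_succ,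
    Gamma_natCast_add_one_add ha₀]
  field_simp

theorem priorDensity_eq_erase_div {R : Fin K → Finset α} (P : ℕ → ℝ) (p : Fin K → ℕ → ℝ)
    (a : (Fin K → Bool) → ℝ) {j : α} {k : Fin K} (hj : ∀ l, j ∈ R l ↔ l = k)
    {C : Finset (Finset α)} (hC : ∀ c ∈ C, j ∉ c) :
    priorDensity R P p a C = priorDensity (fun l => (R l).erase j) P p a C / (R k).card := by
  have hblocks : ∏ c ∈ C, blockWeight (fun l => (R l).erase j) p c = ∏ c ∈ C, blockWeight R p c :=
    prod_congr rfl fun c hc => blockWeight_erase R p (hC c hc)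
  rw [priorDensity_eq_mul_prod_blockWeight, priorDensity_eq_mul_prod_blockWeight,
    patternWeight_erase R a hC, hblocks, prod_inv_factorial_card_eq_div hj]
  ring

theorem prior_ratio_new_singleton_cluster_general {R : Fin K → Finset α} {P : ℕ → ℝ}
    {p : Fin K → ℕ → ℝ} (hp : ∀ l m, p l m ≠ 0)
    {a : (Fin K → Bool) → ℝ} (ha : ∀ h ∈ Hset K, 0 < a h)
    {j : α} {k : Fin K} (hj : ∀ l, j ∈ R l ↔ l = k)
    {C₀ : Finset (Finset α)} (hC₀ : ∀ c ∈ C₀, j ∉ c) (hP : P C₀.card ≠ 0) :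
    priorDensity R P p a (C₀ ∪ {{j}}) / priorDensity (fun l => (R l).erase j) P p a C₀ =
      (P (C₀.card + 1) / P C₀.card) *
        (((C₀.card : ℝ) + 1) / ((C₀.card : ℝ) + ∑ h ∈ Hset K, a h)) *
        ((patternCount (fun l => (R l).erase j) C₀ (onePat k) : ℝ) + a (onePat k)) *
        p k 1 / ((R k).card : ℝ) := by
  have hjC₀ : {j} ∉ C₀ := fun h => hC₀ _ h (mem_singleton_self j)
  have hpat : patternOf R {j} = onePat k := patternOf_singleton hj
  have hdensity : priorDensity (fun l => (R l).erase j) P p a C₀ ≠ 0 :=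
    priorDensity_ne_zero _ hp ha (sum_pos ha ⟨_, onePat_mem_Hset k⟩) hP
  rw [union_comm, ← insert_eq,
    priorDensity_insert p ha hP hjC₀ (hpat ▸ onePat_mem_Hset k), hpat, blockWeight_singleton p hj,
    priorDensity_eq_erase_div P p a hj hC₀, patternCount_erase R hC₀,
    ← mul_div_assoc, div_right_comm, mul_div_cancel_right₀ _ hdensity]

end

/-- Adding a record `j ∈ R_k` (with `|R_k| ≥ 2`) as a new singleton cluster to a
partition `C₀` of `R' = R \ {j}` (with files `R'_l = R_l \ {j}`): writing `n₀ = |C₀|`,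
the ratio of structured prior densities computed with respect to the ground sets `R`
and `R'` is `g_R(C₀ ∪ {{j}})/g_{R'}(C₀) = [P(n₀+1)/P(n₀)] · [(n₀+1)/(n₀+α₀)] ·
(n_{1_k}(C₀)+α_{1_k}) · p_k(1) / |R_k|`. -/
theorem prior_ratio_new_singleton_cluster {α : Type*} [DecidableEq α] {K : ℕ}
    (hK : 1 ≤ K) (R : Fin K → Finset α)
    (hne : ∀ k, (R k).Nonempty)
    (hdisj : ∀ k k' : Fin K, k ≠ k' → Disjoint (R k) (R k'))
    (P : ℕ → ℝ) (hP : ∀ m, 0 < P m)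
    (p : Fin K → ℕ → ℝ) (hp : ∀ k m, 0 < p k m)
    (a : (Fin K → Bool) → ℝ) (ha : ∀ h ∈ Hset K, 0 < a h)
    (j : α) (k : Fin K) (hj : j ∈ R k) (hRk : 2 ≤ (R k).card)
    (C₀ : Finset (Finset α))
    (hC₀ : IsPartitionOf (Finset.univ.biUnion (fun l => (R l).erase j)) C₀) :
    priorDensity R P p a (C₀ ∪ {{j}}) /
        priorDensity (fun l => (R l).erase j) P p a C₀ =
      (P (C₀.card + 1) / P C₀.card) *
        (((C₀.card : ℝ) + 1) / ((C₀.card : ℝ) + ∑ h ∈ Hset K, a h)) *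
        (((C₀.filter (fun c =>
            patternOf (fun l => (R l).erase j) c = onePat k)).card : ℝ) +
          a (onePat k)) *
        p k 1 / ((R k).card : ℝ) := by
  have hj_iff : ∀ l, j ∈ R l ↔ l = k := fun l =>
    ⟨fun hl => by_contra fun h => Finset.disjoint_left.1 (hdisj l k h) hl hj, fun h => h ▸ hj⟩
  exact prior_ratio_new_singleton_cluster_general (fun l m => (hp l m).ne') ha hj_iff
    (fun _ => hC₀.notMem_of_mem (by simp)) (hP _).ne'
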